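/- For every causal model M and any two binary endogenous variables X, Y ∈ V (with values in {0,1}) such that P_M(X=0, Y=0) > 0: the Probability of Sufficiency computed via the B-semantics equals the Probability of Sufficiency computed in the PO-SCM, i.e., PS^B = P^B((Y=1)_{X←1} | X=0, Y=0) = P^N((Y=1)_{X←1} | X=0, Y=0) = PS^N. -/

import Mathlib

/-!
In the PO-SCM a world is a pair `(a, p)` of a world `a` of `M` and an assignment `p` of the
potential outcomes. Fixing `p` turns `M` into a deterministic model `M.fixPO p` on the original
variables, and the joint and the interventional distributions of the PO-SCM are those of
`M.fixPO p`, multiplied by the weight `M.poWeight p` of `p` (`MN_joint`, `MN_pdo`).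

In any well-formed model, acyclicity makes the truncated factorization sum to one
(`sum_prod_cpt`), so that `P_{do(X)}(Y | U = u)` is a sum of products of tables over the
non-intervened endogenous variables (`cfBasic_eq`). This applies both to `M.fixPO p` and to the
actualized refinement `M.refine a`.

The heart of the matter is `sum_poWeight`. The actual world `a` and a counterfactual world `b`
each read, for an endogenous variable `j`, exactly one potential outcome of `j`. Averaging over
the independent potential outcomes gives one factor per pair `(j, κ)`: if `a` and `b` agree on
the parents of `j`, they read the same outcome and the value of `b` is forced to be the actual
one; otherwise they read independent outcomes. This is the table of the refinement `M.refine a`.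
Hence the B-semantics and the PO-SCM agree on every basic counterfactual jointly with any actual
world (`sum_MN_world`), and summing over the worlds with `X = 0`, `Y = 0` gives the claim.
-/

open Finset

noncomputable section

attribute [local instance] Classical.propDecidable

/-- An assignment of values to the variables. -/
abbrev Asg {ν : Type} (Val : ν → Type) : Type := (i : ν) → Val i

/-- A probabilistic causal model (a causal Bayesian network with explicit exogenous
variables): a signature (variables `ν` with value sets `Val`), a graph given by the
parent map `pa` (with `ord` a witness of acyclicity, and the variables in `exo` being
the roots), and a joint probability distribution that is Markov relative to the graph,
presented by the conditional probability table `cpt i w x = P(i = x | pa i = w|_{pa i})`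
of each variable given its parents (for exogenous variables this is the marginal). -/
structure CM (ν : Type) (Val : ν → Type) : Type where
  exo : Finset ν
  pa : ν → Finset ν
  ord : ν → ℕ
  cpt : (i : ν) → Asg Val → Val i → ℝ

/-- A basic counterfactual event `(Y = yv)_{X ← xv}`. -/
structure CFEvent (ν : Type) (Val : ν → Type) : Type where
  X : Finset ν
  xv : Asg Val
  Y : Finset ν
  yv : Asg Val

namespace CM

variable {ν : Type} {Val : ν → Type}

/-- Well-formedness of a causal model: exogenous variables are roots, the graph is
acyclic, the conditional probability table of each variable depends only on its
parents, and each table is a probability distribution. -/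
structure WF [Fintype ν] [∀ i, Fintype (Val i)] (M : CM ν Val) : Prop where
  pa_exo : ∀ i ∈ M.exo, M.pa i = ∅
  acyclic : ∀ i j, j ∈ M.pa i → M.ord j < M.ord i
  cpt_pa : ∀ (i : ν) (w w' : Asg Val) (x : Val i),
    (∀ j ∈ M.pa i, w j = w' j) → M.cpt i w x = M.cpt i w' x
  cpt_nonneg : ∀ i w x, 0 ≤ M.cpt i w x
  cpt_sum : ∀ i w, ∑ x, M.cpt i w x = 1

variable [Fintype ν] [∀ i, Fintype (Val i)] [∀ i, Nonempty (Val i)]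

variable (M : CM ν Val)

/-- The joint distribution `P(U = u, V = v)` (Markov factorization). -/
def joint (w : Asg Val) : ℝ := ∏ i, M.cpt i w (w i)

/-- The interventional distribution `P_{do(X = xv)}` (truncated factorization). -/
def pdo (X : Finset ν) (xv w : Asg Val) : ℝ :=
  if ∀ i ∈ X, w i = xv i then ∏ i ∈ Xᶜ, M.cpt i w (w i) else 0

/-- `P_{do(X = xv)}(Y = yv | U = u)`, where `u` is the exogenous part of `w`:
the probability of the basic counterfactual `(Y = yv)_{X ← xv}` given the world `w`. -/
def cfBasic (X : Finset ν) (xv : Asg Val) (Y : Finset ν) (yv : Asg Val) (w : Asg Val) : ℝ :=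
  (∑ w' : Asg Val,
      if (∀ i ∈ M.exo, w' i = w i) ∧ ∀ i ∈ Y, w' i = yv i then M.pdo X xv w' else 0) /
  (∑ w' : Asg Val, if ∀ i ∈ M.exo, w' i = w i then M.pdo X xv w' else 0)

/-- The probability of a complex counterfactual
`P(y_x, …, z_w) = Σ_{(u,v)} P(y_x | u,v) ⋯ P(z_w | u,v) P(u,v)`. -/
def cfProb (evs : List (CFEvent ν Val)) : ℝ :=
  ∑ w : Asg Val, (evs.map fun e => M.cfBasic e.X e.xv e.Y e.yv w).prod * M.joint w

/-- Conditional probability of a complex counterfactual given an actual event `Z = zv`: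
`P(y_x, …, z_w | Z = zv) = P(y_x, …, z_w, Z = zv) / P(Z = zv)`. -/
def cfProbCond (evs : List (CFEvent ν Val)) (Z : Finset ν) (zv : Asg Val) : ℝ :=
  (∑ w : Asg Val,
      (if ∀ i ∈ Z, w i = zv i then (evs.map fun e => M.cfBasic e.X e.xv e.Y e.yv w).prod
       else 0) * M.joint w) /
  (∑ w : Asg Val, if ∀ i ∈ Z, w i = zv i then M.joint w else 0)

/-- `M` is a structural causal model: every endogenous variable is a deterministic
function of its parents (the exogenous variables are automatically mutually
independent in this presentation). -/
def IsSCM : Prop :=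
  ∀ i ∉ M.exo, ∀ (w : Asg Val) (x : Val i), M.cpt i w x = 0 ∨ M.cpt i w x = 1

/-- The actualized refinement `M^{(u,v)}` of `M` at the actual world `a`:
for each endogenous variable, the conditional distribution given the *actual* values of
its parents is replaced by the point mass at the actual value of the variable. -/
def refine (a : Asg Val) : CM ν Val where
  exo := M.exo
  pa := M.pa
  ord := M.ord
  cpt := fun i w x =>
    if i ∉ M.exo ∧ ∀ j ∈ M.pa i, w j = a j then (if x = a i then 1 else 0)
    else M.cpt i w x

/-- The B-semantics probability of a basic counterfactual,
`P^B((Y = yv)_{X ← xv} | a) = (P^{a})_{do(X = xv)}(Y = yv | U = u)` where `u` is the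
exogenous part of the actual world `a`. -/
def pbBasic (a : Asg Val) (X : Finset ν) (xv : Asg Val) (Y : Finset ν) (yv : Asg Val) : ℝ :=
  (M.refine a).cfBasic X xv Y yv a

/-- The B-semantics probability of a complex counterfactual. -/
def pbProb (evs : List (CFEvent ν Val)) : ℝ :=
  ∑ w : Asg Val, (evs.map fun e => M.pbBasic w e.X e.xv e.Y e.yv).prod * M.joint w

/-- The conditional B-semantics probability of a complex counterfactual given `Z = zv`. -/
def pbProbCond (evs : List (CFEvent ν Val)) (Z : Finset ν) (zv : Asg Val) : ℝ :=
  (∑ w : Asg Val,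
      (if ∀ i ∈ Z, w i = zv i then (evs.map fun e => M.pbBasic w e.X e.xv e.Y e.yv).prod
       else 0) * M.joint w) /
  (∑ w : Asg Val, if ∀ i ∈ Z, w i = zv i then M.joint w else 0)

/-- An assignment of values to the parents of `i`. -/
def PaAsg (i : ν) : Type := (j : {j : ν // j ∈ M.pa i}) → Val j.1

instance (i : ν) : Fintype (M.PaAsg i) := by unfold PaAsg; infer_instance
instance (i : ν) : Nonempty (M.PaAsg i) := ⟨fun j => Classical.arbitrary (Val j.1)⟩

/-- Extend an assignment of the parents of `i` to a full assignment (arbitrarily). -/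
def extendPa (i : ν) (κ : M.PaAsg i) : Asg Val :=
  fun j => if h : j ∈ M.pa i then κ ⟨j, h⟩ else Classical.arbitrary (Val j)

/-- The index type of the potential outcome variables `X_{pa_X}` of the PO-SCM:
one for each endogenous variable `X` and each value `pa_X` of its parents. -/
def POI : Type := Σ i : {i : ν // i ∉ M.exo}, M.PaAsg i.1

instance : Fintype (POI M) := by unfold POI; infer_instance

/-- The value set of the potential outcome variable `X_{pa_X}` is that of `X`. -/
def POB : POI M → Type := fun p => Val p.1.1

instance (p : POI M) : Fintype (POB M p) := by unfold POB; infer_instance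
instance (p : POI M) : Nonempty (POB M p) := by unfold POB; infer_instance

/-- The type of values of the response variable `U_X` of the canonical frame:
functions from values of the parents of `X` to values of `X`. -/
def RType (i : ν) : Type := M.PaAsg i → Val i

instance (i : ν) : Fintype (M.RType i) := by unfold RType; infer_instance
instance (i : ν) : Nonempty (M.RType i) := ⟨fun _ => Classical.arbitrary (Val i)⟩

/-- The index type of the response variables of the canonical frame:
one for each endogenous variable. -/
def RVI : Type := {i : ν // i ∉ M.exo}

instance : Fintype (RVI M) := by unfold RVI; infer_instance

/-- The value set of the response variable `U_X`. -/
def RB : RVI M → Type := fun p => M.RType p.1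

instance (p : RVI M) : Fintype (RB M p) := by unfold RB; infer_instance
instance (p : RVI M) : Nonempty (RB M p) := by unfold RB; infer_instance

end CM

/-- The family of value sets of an extended signature `ν ⊕ β`. -/
def SumVal {ν β : Type} (Val : ν → Type) (B : β → Type) : ν ⊕ β → Type := fun i =>
  match i with
  | .inl j => Val j
  | .inr b => B b

section SumValInst

variable {ν β : Type} {Val : ν → Type} {B : β → Type}

instance [∀ i, Fintype (Val i)] [∀ b, Fintype (B b)] (i : ν ⊕ β) :
    Fintype (SumVal Val B i) := by
  cases i with
  | inl j => exact inferInstanceAs (Fintype (Val j))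
  | inr b => exact inferInstanceAs (Fintype (B b))

instance [∀ i, Nonempty (Val i)] [∀ b, Nonempty (B b)] (i : ν ⊕ β) :
    Nonempty (SumVal Val B i) := by
  cases i with
  | inl j => exact inferInstanceAs (Nonempty (Val j))
  | inr b => exact inferInstanceAs (Nonempty (B b))

/-- Lift an assignment on `ν` to one on `ν ⊕ β` (arbitrary on the new variables). -/
def liftAsg [∀ b, Nonempty (B b)] (xv : Asg Val) : Asg (SumVal Val B) := fun i =>
  match i with
  | .inl j => xv j
  | .inr b => Classical.arbitrary (B b)

/-- Lift a counterfactual event on the original variables to the extended signature. -/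
def liftCFEvent [∀ b, Nonempty (B b)] (e : CFEvent ν Val) : CFEvent (ν ⊕ β) (SumVal Val B) :=
  ⟨e.X.image Sum.inl, liftAsg e.xv, e.Y.image Sum.inl, liftAsg e.yv⟩

variable [Fintype ν] [Fintype β] [∀ i, Fintype (Val i)] [∀ b, Fintype (B b)]
  [∀ i, Nonempty (Val i)] [∀ b, Nonempty (B b)]

/-- The probability, computed in a model `N` over an extended signature, of a complex
counterfactual over the original variables. -/
def extProb (N : CM (ν ⊕ β) (SumVal Val B)) (evs : List (CFEvent ν Val)) : ℝ :=
  N.cfProb (evs.map liftCFEvent)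

/-- The probability, computed in a model `N` over an extended signature, of a complex
counterfactual over the original variables, conditional on an actual event `Z = zv`
over the original variables. -/
def extProbCond (N : CM (ν ⊕ β) (SumVal Val B)) (evs : List (CFEvent ν Val))
    (Z : Finset ν) (zv : Asg Val) : ℝ :=
  N.cfProbCond (evs.map liftCFEvent) (Z.image Sum.inl) (liftAsg zv)

/-- The probability, computed in a model `N` over an extended signature, of a basic
counterfactual conditional on the values `a` of *all* the original variables
(marginalizing over the added exogenous variables), via the law of total probability. -/
def extBasicCond (N : CM (ν ⊕ β) (SumVal Val B)) (a : Asg Val)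
    (X : Finset ν) (xv : Asg Val) (Y : Finset ν) (yv : Asg Val) : ℝ :=
  (∑ w : Asg (SumVal Val B),
      if ∀ i : ν, w (Sum.inl i) = a i then
        N.cfBasic (X.image Sum.inl) (liftAsg xv) (Y.image Sum.inl) (liftAsg yv) w * N.joint w
      else 0) /
  (∑ w : Asg (SumVal Val B), if ∀ i : ν, w (Sum.inl i) = a i then N.joint w else 0)

end SumValInst

namespace CM

variable {ν : Type} {Val : ν → Type} [Fintype ν] [∀ i, Fintype (Val i)] [∀ i, Nonempty (Val i)]
variable (M : CM ν Val)

/-- The PO-SCM `M^N` of `M`: the structural causal model obtained from `M` by adding,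
for each endogenous variable `X` and each value `pa_X` of its parents, an exogenous
potential outcome variable `X_{pa_X}` (with marginal `P_M(X | Pa_X = pa_X)`, all
exogenous variables mutually independent), and the structural equation
`X = X_{pa_X}` whenever `Pa_X = pa_X`. -/
def MN : CM (ν ⊕ POI M) (SumVal Val (POB M)) where
  exo := (M.exo.image Sum.inl) ∪ (univ.image Sum.inr)
  pa := fun i =>
    match i with
    | .inl j => ((M.pa j).image Sum.inl) ∪
        ((univ.filter fun p : POI M => p.1.1 = j).image Sum.inr)
    | .inr _ => ∅
  ord := fun i =>
    match i with
    | .inl j => M.ord j + 1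
    | .inr _ => 0
  cpt := fun i =>
    match i with
    | .inl j => fun w x =>
        if h : j ∈ M.exo then M.cpt j (fun k => w (Sum.inl k)) x
        else if x = w (Sum.inr ⟨⟨j, h⟩, fun k => w (Sum.inl k.1)⟩) then 1 else 0
    | .inr p => fun _ x => M.cpt p.1.1 (M.extendPa p.1.1 p.2) x

/-- `P^N(y_x, …, z_w)`: the probability of a complex counterfactual computed in the
PO-SCM `M^N`. -/
def pnProb (evs : List (CFEvent ν Val)) : ℝ := extProb M.MN evs

/-- `P^N(y_x, …, z_w | Z = zv)`: the conditional probability of a complex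
counterfactual computed in the PO-SCM `M^N`, given an actual event on the
endogenous variables. -/
def pnProbCond (evs : List (CFEvent ν Val)) (Z : Finset ν) (zv : Asg Val) : ℝ :=
  extProbCond M.MN evs Z zv

/-- `P^N((Y = yv)_{X ← xv} | U = u, V = v)`: the probability of a basic counterfactual
computed in the PO-SCM `M^N`, conditional on the exogenous and endogenous variables of
`M` only (marginalizing over the potential outcome variables). -/
def pnBasicCond (a : Asg Val) (X : Finset ν) (xv : Asg Val) (Y : Finset ν) (yv : Asg Val) : ℝ :=
  extBasicCond M.MN a X xv Y yv

/-- A canonical SCM for `M`, determined by a distribution `q` of the response variables: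
the SCM over the canonical frame, which adds for each endogenous variable `X` an
exogenous response variable `U_X` ranging over the functions `f_X : R(Pa_X) → R(X)`,
with the structural equation `X = f_X(Pa_X)` where `f_X` is the value of `U_X`. -/
def canonSCM (q : (p : RVI M) → RType M p.1 → ℝ) : CM (ν ⊕ RVI M) (SumVal Val (RB M)) where
  exo := (M.exo.image Sum.inl) ∪ (univ.image Sum.inr)
  pa := fun i =>
    match i with
    | .inl j => ((M.pa j).image Sum.inl) ∪
        ((univ.filter fun p : RVI M => p.1 = j).image Sum.inr)
    | .inr _ => ∅
  ord := fun i =>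
    match i with
    | .inl j => M.ord j + 1
    | .inr _ => 0
  cpt := fun i =>
    match i with
    | .inl j => fun w x =>
        if h : j ∈ M.exo then M.cpt j (fun k => w (Sum.inl k)) x
        else if x = w (Sum.inr ⟨j, h⟩) (fun k => w (Sum.inl k.1)) then 1 else 0
    | .inr p => fun _ x => q p x

/-- `q` is the distribution of the response variables of a canonical SCM for `M`:
it is a probability distribution (the response variables being mutually independent and
independent of the exogenous variables of `M`, whose distribution is kept), and it
reproduces the conditional probability tables of `M`:
`P_M(X = x | Pa_X = pa_X) = Σ_{f_X with f_X(pa_X) = x} P(U_X = f_X)`. -/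
def IsCanonicalDist (q : (p : RVI M) → RType M p.1 → ℝ) : Prop :=
  (∀ p x, 0 ≤ q p x) ∧ (∀ p, ∑ f, q p f = 1) ∧
  ∀ (p : RVI M) (κ : M.PaAsg p.1) (x : Val p.1),
    M.cpt p.1 (M.extendPa p.1 κ) x = ∑ f ∈ univ.filter (fun f : RType M p.1 => f κ = x), q p f

/-- The distribution of the response variables of the GH-SCM:
`P(U_X = f_X) = ∏_{pa_X} P_M(X = f_X(pa_X) | Pa_X = pa_X)`. -/
def qGH : (p : RVI M) → RType M p.1 → ℝ := fun p f =>
  ∏ κ : M.PaAsg p.1, M.cpt p.1 (M.extendPa p.1 κ) (f κ)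

end CM

/-- A default assignment. -/
def dfltAsg {ν : Type} (Val : ν → Type) [∀ i, Nonempty (Val i)] : Asg Val :=
  fun i => Classical.arbitrary (Val i)

namespace CM

/-! ### Truncated factorizations -/

variable {ν : Type} {Val : ν → Type}

/-- The probability of the exogenous part of the world `a`. -/
def exoProb (M : CM ν Val) (a : Asg Val) : ℝ := ∏ i ∈ M.exo, M.cpt i a (a i)

variable [Fintype ν]

lemma refine_exoProb (M : CM ν Val) (a : Asg Val) : (M.refine a).exoProb a = M.exoProb a :=
  Finset.prod_congr rfl fun _ hi => if_neg fun h => h.1 hi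

lemma joint_eq (M : CM ν Val) (a : Asg Val) :
    M.joint a = M.exoProb a * ∏ i ∈ M.exoᶜ, M.cpt i a (a i) :=
  (Finset.prod_mul_prod_compl M.exo _).symm

variable [∀ i, Fintype (Val i)]

/-- The truncated factorization is a probability distribution: with the variables outside `T`
held fixed, the product of the tables over `T` sums to one. Induction on `T`, summing out a
variable of maximal order first. -/
lemma sum_prod_cpt (M : CM ν Val) (hM : M.WF) (a : Asg Val) (T : Finset ν) :
    (∑ b : Asg Val, if ∀ i ∉ T, b i = a i then ∏ i ∈ T, M.cpt i b (b i) else 0) = 1 := by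
  induction T using Finset.strongInduction with
  | H T ih =>
    rcases T.eq_empty_or_nonempty with rfl | hT
    · have h : ∀ b : Asg Val, (∀ i ∉ (∅ : Finset ν), b i = a i) ↔ b = a := by
        intro b; simp [funext_iff]
      rw [Fintype.sum_eq_single a fun b hb => if_neg fun h' => hb ((h b).1 h')]
      simp
    · obtain ⟨m, hmT, hmax⟩ := Finset.exists_max_image T M.ord hT
      rw [← ih (T.erase m) (Finset.erase_ssubset hmT)]
      -- both sides are grouped according to the assignment `c` with the value at `m` reset
      rw [← Finset.sum_fiberwise (s := univ)
        (g := fun b : Asg Val => Function.update b m (a m))]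
      refine Finset.sum_congr rfl fun c _ => ?_
      by_cases hc : ∀ i ∉ T.erase m, c i = a i
      · rw [if_pos hc]
        have hcm : c m = a m := hc m (by simp)
        have hinj : Function.Injective (fun x : Val m => Function.update c m x) :=
          Function.update_injective c m
        have hfib : (univ.filter fun b : Asg Val => Function.update b m (a m) = c)
            = univ.image (fun x : Val m => Function.update c m x) := by
          ext b
          simp only [mem_filter, mem_univ, true_and, mem_image]
          constructor
          · rintro rfl; exact ⟨b m, by simp⟩
          · rintro ⟨x, rfl⟩; simp [← hcm]
        rw [hfib, Finset.sum_image (fun x _ y _ h => hinj h)]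
        have hterm : ∀ x : Val m,
            (if ∀ i ∉ T, Function.update c m x i = a i then
              ∏ i ∈ T, M.cpt i (Function.update c m x) (Function.update c m x i) else 0)
            = M.cpt m c x * ∏ i ∈ T.erase m, M.cpt i c (c i) := by
          intro x
          rw [if_pos, ← Finset.mul_prod_erase T _ hmT]
          · congr 1
            · rw [Function.update_self]
              apply hM.cpt_pa
              intro j hj
              rw [Function.update_of_ne]
              rintro rfl
              exact lt_irrefl _ (hM.acyclic _ _ hj)
            · refine Finset.prod_congr rfl fun i hi => ?_
              rw [Function.update_of_ne (Finset.ne_of_mem_erase hi)]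
              apply hM.cpt_pa
              intro j hj
              rw [Function.update_of_ne]
              rintro rfl
              exact absurd (hM.acyclic _ _ hj)
                (not_lt.mpr (hmax i (Finset.mem_of_mem_erase hi)))
          · intro i hi
            have him : i ≠ m := fun h => hi (h ▸ hmT)
            rw [Function.update_of_ne him]
            exact hc i (by simp [hi])
        simp_rw [hterm]
        rw [← Finset.sum_mul, hM.cpt_sum, one_mul]
      · rw [if_neg hc]
        refine Finset.sum_eq_zero fun b hb => if_neg fun hb' => hc ?_
        obtain rfl := (Finset.mem_filter.mp hb).2
        intro i hi
        by_cases him : i = m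
        · subst him; simp
        · rw [Function.update_of_ne him]
          exact hb' i fun h => hi (Finset.mem_erase.mpr ⟨him, h⟩)

/-- The sum of the products of the tables of the non-intervened endogenous variables, over the
worlds that agree with `a` on the exogenous variables and satisfy `X = xv` and `Y = yv`. -/
def core (M : CM ν Val) (X : Finset ν) (xv : Asg Val) (Y : Finset ν) (yv a : Asg Val) : ℝ :=
  ∑ b : Asg Val,
    if (∀ i ∈ M.exo, b i = a i) ∧ (∀ i ∈ X, b i = xv i) ∧ (∀ i ∈ Y, b i = yv i) then
      ∏ i ∈ M.exoᶜ \ X, M.cpt i b (b i) else 0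

lemma pdo_eq (M : CM ν Val) (hM : M.WF) (X : Finset ν) (hX : ∀ i ∈ X, i ∉ M.exo)
    (xv a b : Asg Val) (hab : ∀ i ∈ M.exo, b i = a i) :
    M.pdo X xv b = M.exoProb a *
      if ∀ i ∈ X, b i = xv i then ∏ i ∈ M.exoᶜ \ X, M.cpt i b (b i) else 0 := by
  unfold pdo exoProb
  split_ifs
  · have hU : Xᶜ = M.exo ∪ (M.exoᶜ \ X) := by
      ext i
      have := hX i
      simp only [mem_compl, mem_union, mem_sdiff]
      tauto
    have hD : Disjoint M.exo (M.exoᶜ \ X) := by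
      rw [Finset.disjoint_left]
      intro i hi
      simp [hi]
    rw [hU, Finset.prod_union hD]
    congr 1
    refine Finset.prod_congr rfl fun i hi => ?_
    rw [hab i hi]
    apply hM.cpt_pa
    simp [hM.pa_exo i hi]
  · simp

/-- The normalizing denominator of `P_{do(X)}(· | U = u)` is the probability of `u`. -/
lemma cfBasic_eq (M : CM ν Val) (hM : M.WF) (X : Finset ν) (hX : ∀ i ∈ X, i ∉ M.exo)
    (xv : Asg Val) (Y : Finset ν) (yv a : Asg Val) (ha : M.exoProb a ≠ 0) :
    M.cfBasic X xv Y yv a = M.core X xv Y yv a := by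
  unfold cfBasic
  have hnum : (∑ b : Asg Val, if (∀ i ∈ M.exo, b i = a i) ∧ ∀ i ∈ Y, b i = yv i then
      M.pdo X xv b else 0) = M.exoProb a * M.core X xv Y yv a := by
    unfold core
    rw [Finset.mul_sum]
    refine Finset.sum_congr rfl fun b _ => ?_
    by_cases hb : ∀ i ∈ M.exo, b i = a i
    · rw [M.pdo_eq hM X hX xv a b hb]
      by_cases h2 : ∀ i ∈ Y, b i = yv i
      · rw [if_pos ⟨hb, h2⟩]
        by_cases h1 : ∀ i ∈ X, b i = xv i
        · rw [if_pos h1, if_pos ⟨hb, h1, h2⟩]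
        · rw [if_neg h1, if_neg fun h => h1 h.2.1]
      · rw [if_neg fun h => h2 h.2, if_neg fun h => h2 h.2.2, mul_zero]
    · simp only [hb, false_and, if_false, mul_zero]
  have hden : (∑ b : Asg Val, if ∀ i ∈ M.exo, b i = a i then M.pdo X xv b else 0)
      = M.exoProb a := by
    rw [← mul_one (M.exoProb a),
      ← M.sum_prod_cpt hM (fun i => if i ∈ X then xv i else a i) (M.exoᶜ \ X), Finset.mul_sum]
    refine Finset.sum_congr rfl fun b _ => ?_
    have hiff : (∀ i ∉ M.exoᶜ \ X, b i = if i ∈ X then xv i else a i) ↔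
        (∀ i ∈ M.exo, b i = a i) ∧ ∀ i ∈ X, b i = xv i := by
      constructor
      · intro h
        refine ⟨fun i hi => ?_, fun i hi => ?_⟩
        · have := h i (by simp [hi])
          rwa [if_neg fun hx => hX i hx hi] at this
        · have := h i (by simp [hi])
          rwa [if_pos hi] at this
      · rintro ⟨h1, h2⟩ i hi
        by_cases hx : i ∈ X
        · rw [if_pos hx]; exact h2 i hx
        · rw [if_neg hx]; exact h1 i (by simpa [hx] using hi)
    rw [if_congr hiff rfl rfl]
    by_cases hb : ∀ i ∈ M.exo, b i = a i
    · rw [if_pos hb, M.pdo_eq hM X hX xv a b hb]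
      by_cases h1 : ∀ i ∈ X, b i = xv i
      · rw [if_pos h1, if_pos ⟨hb, h1⟩]
      · rw [if_neg h1, if_neg fun h => h1 h.2]
    · rw [if_neg hb, if_neg fun h => hb h.1, mul_zero]
  rw [hnum, hden, mul_div_cancel_left₀ _ ha]

lemma cfBasic_mul_exoProb (M : CM ν Val) (hM : M.WF) (X : Finset ν) (hX : ∀ i ∈ X, i ∉ M.exo)
    (xv : Asg Val) (Y : Finset ν) (yv a : Asg Val) :
    M.cfBasic X xv Y yv a * M.exoProb a = M.core X xv Y yv a * M.exoProb a := by
  by_cases ha : M.exoProb a = 0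
  · simp [ha]
  · rw [M.cfBasic_eq hM X hX xv Y yv a ha]

lemma refine_WF (M : CM ν Val) (hM : M.WF) (a : Asg Val) : (M.refine a).WF where
  pa_exo := hM.pa_exo
  acyclic := hM.acyclic
  cpt_pa i w w' x h := by
    have hiff : (i ∉ M.exo ∧ ∀ j ∈ M.pa i, w j = a j) ↔
        (i ∉ M.exo ∧ ∀ j ∈ M.pa i, w' j = a j) :=
      and_congr_right fun _ => forall₂_congr fun j hj => by rw [h j hj]
    simp only [refine, hiff, hM.cpt_pa i w w' x h]
  cpt_nonneg i w x := by
    simp only [refine]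
    split_ifs
    exacts [zero_le_one, le_rfl, hM.cpt_nonneg i w x]
  cpt_sum i w := by
    by_cases h : i ∉ M.exo ∧ ∀ j ∈ M.pa i, w j = a j
    · have hpt : ∀ x, (M.refine a).cpt i w x = if x = a i then 1 else 0 := fun x => if_pos h
      simp [hpt]
    · simp only [refine, h, if_false, hM.cpt_sum]

/-! ### The PO-SCM with its potential outcomes fixed -/

variable (M : CM ν Val)

/-- The values of the parents of `j` in the world `w`. -/
def restrictPa (j : ν) (w : Asg Val) : M.PaAsg j := fun k => w k.1

/-- The deterministic model on the original variables obtained from the PO-SCM of `M` by fixing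
the values of the potential outcome variables to `p`. -/
def fixPO (p : Asg (POB M)) : CM ν Val where
  exo := M.exo
  pa := M.pa
  ord := M.ord
  cpt := fun j w x =>
    if h : j ∈ M.exo then M.cpt j w x
    else if x = p ⟨⟨j, h⟩, M.restrictPa j w⟩ then 1 else 0

/-- The world of the PO-SCM made of a world of `M` and values of the potential outcomes. -/
def mkWorld (a : Asg Val) (p : Asg (POB M)) : Asg (SumVal Val (POB M)) := fun i =>
  match i with
  | .inl j => a j
  | .inr q => p q

/-- A sum over the worlds of the PO-SCM is a double sum. It is stated for an arbitrary
enumeration `inst` of the worlds, because the one used in `cfBasic` and the one inferred for a sum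
type rest on different decidability instances. -/
lemma sum_mkWorld (inst : Fintype (Asg (SumVal Val (POB M))))
    (f : Asg (SumVal Val (POB M)) → ℝ) :
    ∑ W ∈ @univ _ inst, f W = ∑ a : Asg Val, ∑ p : Asg (POB M), f (M.mkWorld a p) := by
  rw [← Fintype.sum_prod_type']
  let e : Asg (SumVal Val (POB M)) ≃ Asg Val × Asg (POB M) :=
    { toFun := fun W => (fun j => W (Sum.inl j), fun q => W (Sum.inr q))
      invFun := fun x => M.mkWorld x.1 x.2
      left_inv := fun W => by funext i; cases i <;> rfl
      right_inv := fun _ => rfl }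
  exact (Equiv.sum_comp e.symm f).symm

lemma fixPO_WF (hM : M.WF) (p : Asg (POB M)) : (M.fixPO p).WF where
  pa_exo := hM.pa_exo
  acyclic := hM.acyclic
  cpt_pa i w w' x h := by
    have hr : M.restrictPa i w = M.restrictPa i w' :=
      funext fun k => h k.1 k.2
    by_cases hi : i ∈ M.exo
    · simp only [fixPO, hi, dif_pos, hM.cpt_pa i w w' x h]
    · have hpt : ∀ κ κ' : M.PaAsg i, κ = κ' →
          (if x = p ⟨⟨i, hi⟩, κ⟩ then (1 : ℝ) else 0) = if x = p ⟨⟨i, hi⟩, κ'⟩ then 1 else 0 := by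
        rintro κ _ rfl
        rfl
      simp only [fixPO, hi, dif_neg, not_false_eq_true]
      exact hpt _ _ hr
  cpt_nonneg i w x := by
    simp only [fixPO]
    split_ifs
    exacts [hM.cpt_nonneg i w x, zero_le_one, le_rfl]
  cpt_sum i w := by
    by_cases h : i ∈ M.exo
    · simp only [fixPO, h, dif_pos, hM.cpt_sum]
    · simp only [fixPO, h, dif_neg, not_false_eq_true]
      have hpt : ∀ v : Val i, (∑ x, if x = v then (1 : ℝ) else 0) = 1 := fun v => by simp
      exact hpt _

lemma fixPO_exoProb (p : Asg (POB M)) (a : Asg Val) : (M.fixPO p).exoProb a = M.exoProb a :=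
  Finset.prod_congr rfl fun _ hi => dif_pos hi

variable [∀ i, Nonempty (Val i)]

/-- The probability in the PO-SCM that the potential outcome variables take the values `p`. -/
def poWeight (p : Asg (POB M)) : ℝ := ∏ q : POI M, M.cpt q.1.1 (M.extendPa q.1.1 q.2) (p q)

lemma MN_joint (a : Asg Val) (p : Asg (POB M)) :
    M.MN.joint (M.mkWorld a p) = (M.fixPO p).joint a * M.poWeight p := by
  unfold joint
  rw [Fintype.prod_sum_type]
  rfl

lemma MN_pdo (X : Finset ν) (xv a : Asg Val) (p : Asg (POB M)) :
    M.MN.pdo (X.image Sum.inl) (liftAsg xv) (M.mkWorld a p)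
      = (M.fixPO p).pdo X xv a * M.poWeight p := by
  unfold pdo
  have hiff : (∀ i ∈ X.image Sum.inl, M.mkWorld a p i = liftAsg xv i) ↔
      ∀ i ∈ X, a i = xv i := by
    rw [Finset.forall_mem_image]
    rfl
  simp only [hiff]
  split_ifs
  · rw [← Finset.prod_ite_mem_eq, Fintype.prod_sum_type, ← Finset.prod_ite_mem_eq Xᶜ]
    congr 1
    · refine Finset.prod_congr rfl fun j _ => ?_
      simp only [mem_compl, mem_image, Sum.inl.injEq, exists_eq_right]
      rfl
    · refine Finset.prod_congr rfl fun q _ => ?_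
      rw [if_pos (by simp)]
      rfl
  · simp

/-- In a world with potential outcomes `p`, the PO-SCM evaluates counterfactuals as `M.fixPO p`
does; the weight of `p` cancels. -/
lemma MN_cfBasic (X : Finset ν) (xv : Asg Val) (Y : Finset ν) (yv a : Asg Val)
    (p : Asg (POB M)) (hp : M.poWeight p ≠ 0) :
    M.MN.cfBasic (X.image Sum.inl) (liftAsg xv) (Y.image Sum.inl) (liftAsg yv) (M.mkWorld a p)
      = (M.fixPO p).cfBasic X xv Y yv a := by
  have hexo : ∀ (b : Asg Val) (p' : Asg (POB M)),
      (∀ i ∈ M.MN.exo, M.mkWorld b p' i = M.mkWorld a p i) ↔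
        p' = p ∧ ∀ i ∈ M.exo, b i = a i := by
    intro b p'
    constructor
    · intro h
      refine ⟨funext fun q => h (Sum.inr q) ?_, fun i hi => h (Sum.inl i) ?_⟩ <;> simp [MN]
      exact hi
    · rintro ⟨rfl, h⟩ (i | q) hi
      · exact h i (by simpa [MN] using hi)
      · rfl
  have hY : ∀ (b : Asg Val) (p' : Asg (POB M)),
      (∀ i ∈ Y.image Sum.inl, M.mkWorld b p' i = liftAsg yv i) ↔ ∀ i ∈ Y, b i = yv i := by
    intro b p'
    rw [Finset.forall_mem_image]
    rfl
  -- restricting a sum over the worlds `(b, p')` to `p' = p`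
  have key : ∀ (C : Asg Val → Prop) (_ : ∀ p' b, Decidable (p' = p ∧ C b)),
      (∑ b : Asg Val, ∑ p' : Asg (POB M), if (p' = p ∧ C b) then
        M.MN.pdo (X.image Sum.inl) (liftAsg xv) (M.mkWorld b p') else 0)
      = (∑ b : Asg Val, if C b then (M.fixPO p).pdo X xv b else 0) * M.poWeight p := by
    intro C _
    rw [Finset.sum_mul]
    refine Finset.sum_congr rfl fun b _ => ?_
    rw [Fintype.sum_eq_single p fun p' h => if_neg fun h' => h h'.1, MN_pdo]
    by_cases h : C b <;> simp [h]
  unfold cfBasic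
  rw [sum_mkWorld, sum_mkWorld]
  simp only [hexo, hY, and_assoc]
  rw [key, key, mul_div_mul_right _ _ hp, show (M.fixPO p).exo = M.exo from rfl]
  congr!

/-! ### Averaging over the potential outcomes -/

/-- The factor of the endogenous variable `j` in `sum_poWeight`; `t` records whether `j` is read
in the counterfactual world `b` as well as in the actual world `a`. -/
lemma prod_outcomes (hM : M.WF) (a b : Asg Val) (j : ν) (hj : j ∉ M.exo) (t : Prop) [Decidable t] :
    (∏ κ : M.PaAsg j, ∑ v : Val j, M.cpt j (M.extendPa j κ) v *
      ((if κ = M.restrictPa j a then (if a j = v then 1 else 0) else 1) *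
        if t ∧ κ = M.restrictPa j b then (if b j = v then 1 else 0) else 1))
      = M.cpt j a (a j) * if t then (M.refine a).cpt j b (b j) else 1 := by
  have hext : ∀ (w : Asg Val) (x : Val j),
      M.cpt j (M.extendPa j (M.restrictPa j w)) x = M.cpt j w x := by
    intro w x
    apply hM.cpt_pa
    intro i hi
    simp [extendPa, restrictPa, hi]
  have hiff : (∀ i ∈ M.pa j, b i = a i) ↔
      M.restrictPa j b = M.restrictPa j a :=
    ⟨fun h => funext fun k => h k.1 k.2, fun h i hi => congrFun h ⟨i, hi⟩⟩
  by_cases ht : t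
  · by_cases hab : M.restrictPa j b = M.restrictPa j a
    · rw [Fintype.prod_eq_single (M.restrictPa j a)]
      · simp only [refine, ht, hab, hiff, hext, hj, true_and, if_true, not_false_eq_true]
        rw [Fintype.sum_eq_single (a j)]
        · simp
        · intro v hv
          simp [hv.symm]
      · intro κ hκ
        simp only [hab, hκ, and_false, if_false, mul_one, hM.cpt_sum]
    · rw [Fintype.prod_eq_mul (M.restrictPa j a) (M.restrictPa j b) (Ne.symm hab)]
      · have hba : ¬ (M.restrictPa j a) = M.restrictPa j b := fun h => hab h.symm
        simp [refine, ht, hab, hba, hiff, hext]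
      · rintro κ ⟨h1, h2⟩
        simp only [h1, h2, and_false, if_false, mul_one, hM.cpt_sum]
  · rw [Fintype.prod_eq_single (M.restrictPa j a)]
    · simp [ht, hext]
    · intro κ hκ
      simp only [hκ, ht, false_and, if_false, mul_one, hM.cpt_sum]

/-- Averaging over the potential outcomes, the event that `a` solves the structural equations and
`b` solves those of the variables in `T` has the probability given by the tables of `M` at `a`
and those of the actualized refinement `M.refine a` at `b`. -/
lemma sum_poWeight (hM : M.WF) (a b : Asg Val) (T : Finset ν) (hT : ∀ i ∈ T, i ∉ M.exo) :
    (∑ p : Asg (POB M), M.poWeight p *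
      ((∏ j ∈ M.exoᶜ, (M.fixPO p).cpt j a (a j)) * ∏ j ∈ T, (M.fixPO p).cpt j b (b j)))
      = (∏ j ∈ M.exoᶜ, M.cpt j a (a j)) * ∏ j ∈ T, (M.refine a).cpt j b (b j) := by
  -- products over endogenous variables, as products over the subtype
  have hsub : ∀ f : ν → ℝ, ∏ j ∈ M.exoᶜ, f j = ∏ j : {i : ν // i ∉ M.exo}, f j.1 := by
    intro f
    exact Finset.prod_subtype _ (by simp) f
  have hsubT : ∀ f : ν → ℝ,
      ∏ j ∈ T, f j = ∏ j : {i : ν // i ∉ M.exo}, if j.1 ∈ T then f j.1 else 1 := by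
    intro f
    rw [← hsub fun j => if j ∈ T then f j else 1, Finset.prod_ite_mem]
    congr 1
    ext i
    have := hT i
    simp only [mem_inter, mem_compl]
    tauto
  have hPOI : ∀ f : POI M → ℝ,
      ∏ q, f q = ∏ j : {i : ν // i ∉ M.exo}, ∏ κ : M.PaAsg j.1, f ⟨j, κ⟩ := by
    intro f
    rw [← Fintype.prod_sigma' (fun (j : {i : ν // i ∉ M.exo}) (κ : M.PaAsg j.1) => f ⟨j, κ⟩)]
    exact Fintype.prod_equiv (Equiv.refl _) _ _ fun _ => rfl
  let F : (q : POI M) → POB M q → ℝ := fun q v =>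
    M.cpt q.1.1 (M.extendPa q.1.1 q.2) v *
      ((if q.2 = M.restrictPa q.1.1 a then (if a q.1.1 = v then 1 else 0) else 1) *
        if q.1.1 ∈ T ∧ q.2 = M.restrictPa q.1.1 b then (if b q.1.1 = v then 1 else 0) else 1)
  have hF : ∀ p : Asg (POB M), M.poWeight p *
      ((∏ j ∈ M.exoᶜ, (M.fixPO p).cpt j a (a j)) * ∏ j ∈ T, (M.fixPO p).cpt j b (b j))
      = ∏ q, F q (p q) := by
    intro p
    simp only [F, Finset.prod_mul_distrib]
    congr 1
    rw [hsub, hsubT, hPOI, hPOI]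
    congr 1
    · refine Finset.prod_congr rfl fun j _ => ?_
      rw [Fintype.prod_eq_single (M.restrictPa j.1 a) fun κ h => if_neg h, if_pos rfl]
      exact dif_neg j.2
    · refine Finset.prod_congr rfl fun j _ => ?_
      rw [Fintype.prod_eq_single (M.restrictPa j.1 b)
        fun κ h => if_neg fun h' => h h'.2]
      by_cases hjT : j.1 ∈ T
      · rw [if_pos hjT, if_pos ⟨hjT, rfl⟩]
        exact dif_neg j.2
      · rw [if_neg hjT, if_neg fun h => hjT h.1]
  have hswap : ∑ p : Asg (POB M), ∏ q, F q (p q) = ∏ q, ∑ v, F q v := by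
    rw [Finset.prod_univ_sum, Fintype.piFinset_univ]
  rw [Finset.sum_congr rfl fun p _ => hF p, hswap, hPOI, hsub, hsubT, ← Finset.prod_mul_distrib]
  refine Finset.prod_congr rfl fun j _ => ?_
  rw [← M.prod_outcomes hM a b j.1 j.2 (j.1 ∈ T)]
  refine Finset.prod_congr rfl fun κ _ => ?_
  let q : POI M := ⟨j, κ⟩
  change ∑ v : POB M q, F q v = _
  exact Fintype.sum_equiv (Equiv.refl (POB M q)) _ _ fun _ => rfl

lemma sum_MN_joint (hM : M.WF) (a : Asg Val) :
    ∑ p : Asg (POB M), M.MN.joint (M.mkWorld a p) = M.joint a := by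
  have h := M.sum_poWeight hM a a ∅ (by simp)
  simp only [Finset.prod_empty, mul_one] at h
  rw [joint_eq, ← h, Finset.mul_sum]
  refine Finset.sum_congr rfl fun p _ => ?_
  rw [MN_joint, joint_eq, fixPO_exoProb, mul_assoc, mul_comm (M.poWeight p)]
  rfl

/-- The PO-SCM and the B-semantics give a basic counterfactual the same joint probability with
each actual world `a` of `M`. -/
lemma sum_MN_world (hM : M.WF) (X : Finset ν) (hX : ∀ i ∈ X, i ∉ M.exo)
    (xv : Asg Val) (Y : Finset ν) (yv a : Asg Val) :
    ∑ p : Asg (POB M), M.MN.cfBasic (X.image Sum.inl) (liftAsg xv) (Y.image Sum.inl)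
        (liftAsg yv) (M.mkWorld a p) * M.MN.joint (M.mkWorld a p)
      = M.pbBasic a X xv Y yv * M.joint a := by
  have hL : ∀ p : Asg (POB M), M.MN.cfBasic (X.image Sum.inl) (liftAsg xv) (Y.image Sum.inl)
        (liftAsg yv) (M.mkWorld a p) * M.MN.joint (M.mkWorld a p)
      = M.exoProb a * (M.poWeight p * ((∏ j ∈ M.exoᶜ, (M.fixPO p).cpt j a (a j)) *
          (M.fixPO p).core X xv Y yv a)) := by
    intro p
    by_cases hp : M.poWeight p = 0
    · rw [MN_joint, hp]; simp
    · have h := (M.fixPO p).cfBasic_mul_exoProb (M.fixPO_WF hM p) X hX xv Y yv a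
      rw [fixPO_exoProb] at h
      rw [MN_cfBasic _ _ _ _ _ _ _ hp, MN_joint, joint_eq, fixPO_exoProb]
      change _ * (_ * (∏ j ∈ M.exoᶜ, (M.fixPO p).cpt j a (a j)) * _) = _
      linear_combination
        (M.poWeight p * ∏ j ∈ M.exoᶜ, (M.fixPO p).cpt j a (a j)) * h
  have hR : M.pbBasic a X xv Y yv * M.joint a
      = M.exoProb a * ((∏ j ∈ M.exoᶜ, M.cpt j a (a j)) * (M.refine a).core X xv Y yv a) := by
    have h := (M.refine a).cfBasic_mul_exoProb (M.refine_WF hM a) X hX xv Y yv a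
    rw [refine_exoProb] at h
    rw [joint_eq, pbBasic]
    linear_combination (∏ j ∈ M.exoᶜ, M.cpt j a (a j)) * h
  rw [Finset.sum_congr rfl fun p _ => hL p, hR, ← Finset.mul_sum]
  congr 1
  unfold core
  simp only [Finset.mul_sum]
  rw [Finset.sum_comm]
  refine Finset.sum_congr rfl fun b _ => ?_
  change (∑ p : Asg (POB M), M.poWeight p * ((∏ j ∈ M.exoᶜ, (M.fixPO p).cpt j a (a j)) *
      if (∀ i ∈ M.exo, b i = a i) ∧ (∀ i ∈ X, b i = xv i) ∧ (∀ i ∈ Y, b i = yv i) then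
        ∏ i ∈ M.exoᶜ \ X, (M.fixPO p).cpt i b (b i) else 0))
    = (∏ j ∈ M.exoᶜ, M.cpt j a (a j)) *
      if (∀ i ∈ M.exo, b i = a i) ∧ (∀ i ∈ X, b i = xv i) ∧ (∀ i ∈ Y, b i = yv i) then
        ∏ i ∈ M.exoᶜ \ X, (M.refine a).cpt i b (b i) else 0
  split_ifs
  · exact M.sum_poWeight hM a b _ (by simp +contextual)
  · simp

/-- The B-semantics and the PO-SCM agree on every basic counterfactual conditional on an actual
event. -/
lemma pbProbCond_eq_pnProbCond (hM : M.WF) (e : CFEvent ν Val) (hX : ∀ i ∈ e.X, i ∉ M.exo)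
    (Z : Finset ν) (zv : Asg Val) :
    M.pbProbCond [e] Z zv = M.pnProbCond [e] Z zv := by
  have hZ : ∀ (a : Asg Val) (p : Asg (POB M)),
      (∀ i ∈ Z.image Sum.inl, M.mkWorld a p i = liftAsg zv i) ↔ ∀ i ∈ Z, a i = zv i := by
    intro a p
    rw [Finset.forall_mem_image]
    rfl
  unfold pbProbCond pnProbCond extProbCond cfProbCond
  rw [sum_mkWorld, sum_mkWorld]
  simp only [hZ, List.map_cons, List.map_nil, List.prod_cons, List.prod_nil, mul_one,
    liftCFEvent]
  congr 1
  · refine Finset.sum_congr rfl fun a _ => ?_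
    split_ifs
    · exact (M.sum_MN_world hM e.X hX e.xv e.Y e.yv a).symm
    · simp
  · refine Finset.sum_congr rfl fun a _ => ?_
    split_ifs
    · exact (M.sum_MN_joint hM a).symm
    · simp

end CM

/-- **Proposition 3 (PS).** Given a causal model `M` and any two binary endogenous
variables `X, Y ∈ V` (with two values, `0` and `1`) such that `P_M(X=0, Y=0) > 0`:
the Probability of Sufficiency computed via the B-semantics equals the one computed in
the PO-SCM, i.e.
`PS^B = P^B((Y=1)_{X←1} | X=0, Y=0) = P^N((Y=1)_{X←1} | X=0, Y=0) = PS^N`. -/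
theorem PS_B_eq_PS_N
    {ν : Type} {Val : ν → Type} [Fintype ν] [∀ i, Fintype (Val i)] [∀ i, Nonempty (Val i)]
    (M : CM ν Val) (hM : M.WF)
    (X Y : ν) (hX : X ∉ M.exo) (hY : Y ∉ M.exo) (hXY : X ≠ Y)
    (x0 x1 : Val X) (hx : x0 ≠ x1) (hxbin : ∀ v : Val X, v = x0 ∨ v = x1)
    (y0 y1 : Val Y) (hy : y0 ≠ y1) (hybin : ∀ v : Val Y, v = y0 ∨ v = y1)
    (hpos : 0 < ∑ w : Asg Val, if w X = x0 ∧ w Y = y0 then M.joint w else 0) :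
    M.pbProbCond [⟨{X}, Function.update (dfltAsg Val) X x1, {Y}, Function.update (dfltAsg Val) Y y1⟩]
        {X, Y} (Function.update (Function.update (dfltAsg Val) X x0) Y y0)
    = M.pnProbCond [⟨{X}, Function.update (dfltAsg Val) X x1, {Y}, Function.update (dfltAsg Val) Y y1⟩]
        {X, Y} (Function.update (Function.update (dfltAsg Val) X x0) Y y0) := by
  exact M.pbProbCond_eq_pnProbCond hM _ (by simpa using hX) _ _

end
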